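/- Let n ≥ 3, let Γ be an access structure on n players satisfying monotonicity, no-cloning and no-redundancy, and let ψ be a pure QSS state for Γ. Then for every player i ∈ {1,…,n}, S({i}) = log 2; equivalently, the reduction of ψ to the single qubit of player i equals (1/2)·I. -/

import Mathlib

open Finset

/-- Monotonicity of an access structure on `n` players (players = `Fin n`). -/
def Monotonic {n : ℕ} (Γ : Finset (Fin n) → Prop) : Prop :=
  ∀ A B : Finset (Fin n), Γ A → A ⊆ B → Γ B

/-- No-cloning: a set is authorized iff its complement is not. -/
def NoCloning {n : ℕ} (Γ : Finset (Fin n) → Prop) : Prop :=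
  ∀ A : Finset (Fin n), Γ A ↔ ¬ Γ Aᶜ

/-- `A` is a minimal authorized set of `Γ`. -/
def IsMinimal {n : ℕ} (Γ : Finset (Fin n) → Prop) (A : Finset (Fin n)) : Prop :=
  Γ A ∧ ∀ B : Finset (Fin n), B ⊂ A → ¬ Γ B

/-- No-redundancy: every player lies in some minimal authorized set. -/
def NoRedundancy {n : ℕ} (Γ : Finset (Fin n) → Prop) : Prop :=
  ∀ i : Fin n, ∃ A : Finset (Fin n), IsMinimal Γ A ∧ i ∈ A

noncomputable section

/-- Combine an assignment on `A` and one on `Aᶜ` into a full bit string. -/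
def glue {m : ℕ} (A : Finset (Fin m)) (u : {x // x ∈ A} → Fin 2)
    (w : {x // x ∈ Aᶜ} → Fin 2) : Fin m → Fin 2 :=
  fun x => if h : x ∈ A then u ⟨x, h⟩ else w ⟨x, Finset.mem_compl.mpr h⟩

/-- Reduced density matrix of the pure state `ψ` on the qubit positions in `A`:
the partial trace over the positions outside `A` of `ψψ†`. -/
def reducedDensity {m : ℕ} (ψ : (Fin m → Fin 2) → ℂ) (A : Finset (Fin m)) :
    Matrix ({x // x ∈ A} → Fin 2) ({x // x ∈ A} → Fin 2) ℂ :=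
  fun u v => ∑ w : {x // x ∈ Aᶜ} → Fin 2,
    ψ (glue A u w) * (starRingEnd ℂ) (ψ (glue A v w))

/-- The reduction of `ψ` to `A` is maximally mixed, i.e. equals `2^{-|A|} · I`. -/
def MaximallyMixed {m : ℕ} (ψ : (Fin m → Fin 2) → ℂ) (A : Finset (Fin m)) : Prop :=
  reducedDensity ψ A =
    ((2 : ℂ) ^ A.card)⁻¹ •
      (1 : Matrix ({x // x ∈ A} → Fin 2) ({x // x ∈ A} → Fin 2) ℂ)

open Classical in
/-- Von Neumann entropy (natural logarithm): sum of `-λ log λ` over the eigenvalues. -/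
def vnEntropy {ι : Type} [Fintype ι] [DecidableEq ι] (ρ : Matrix ι ι ℂ) : ℝ :=
  if h : ρ.IsHermitian then ∑ i, Real.negMulLog (h.eigenvalues i) else 0

/-- Entropy of the reduction of `ψ` to the set `A` of qubit positions. -/
def Sent {m : ℕ} (ψ : (Fin m → Fin 2) → ℂ) (A : Finset (Fin m)) : ℝ :=
  vnEntropy (reducedDensity ψ A)

/-- The qubit positions (in `{0,1,…,n} = Fin (n+1)`, where `0` is the reference qubit)
of a set of players `A ⊆ Fin n`: player `i` holds position `i.succ`. -/
def posOf {n : ℕ} (A : Finset (Fin n)) : Finset (Fin (n + 1)) := A.image Fin.succ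

/-- `ψ` is a pure QSS state for the access structure `Γ`: a normalized pure state of
`n+1` qubits (position `0` being the reference qubit `R`) satisfying Recoverability
`S(R) + S(A) - S(R ∪ A) = 2 log 2` for authorized `A` and Secrecy
`S(R) + S(B) - S(R ∪ B) = 0` for unauthorized `B`. -/
structure IsPureQSSState {n : ℕ} (Γ : Finset (Fin n) → Prop)
    (ψ : (Fin (n + 1) → Fin 2) → ℂ) : Prop where
  normalized : ∑ x : Fin (n + 1) → Fin 2, ‖ψ x‖ ^ 2 = 1
  recover : ∀ A : Finset (Fin n), Γ A →
    Sent ψ {0} + Sent ψ (posOf A) - Sent ψ (insert 0 (posOf A)) = 2 * Real.log 2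
  secrecy : ∀ B : Finset (Fin n), ¬ Γ B →
    Sent ψ {0} + Sent ψ (posOf B) - Sent ψ (insert 0 (posOf B)) = 0

end

/-!
Let `B` be unauthorized while `B ∪ {i}` is authorized, as happens when player `i` is dropped from a
minimal authorized set. Subtracting secrecy of `B` from recoverability of `B ∪ {i}` gives
`(S(B ∪ i) - S(B)) + (S(R ∪ B) - S(R ∪ B ∪ i)) = 2 log 2`. Subadditivity bounds the first bracket by
`S(i)`; for a pure state `S` is invariant under complements, so subadditivity on complements
(Araki–Lieb) bounds the second bracket by `S(i)` too. Hence `S(i) ≥ log 2`, the largest entropy a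
qubit can have, and it is attained only by the maximally mixed state.

Subadditivity reduces to its classical counterpart: measuring in the product of the eigenbases of
the two marginals does not decrease the entropy, and the outcome distribution has the spectra of the
marginals as its own marginals.
-/

open Matrix
open scoped ComplexOrder Kronecker

/-! ### Entropy of finite distributions -/

section Classical

variable {ι κ : Type*} [Fintype ι] [Fintype κ]

theorem negMulLog_add_mul_log_le {p q : ℝ} (hp : 0 ≤ p) (hq : 0 ≤ q) (hpq : q = 0 → p = 0) :
    Real.negMulLog p + p * Real.log q ≤ q - p := by
  rcases hq.eq_or_lt with hq0 | hq0
  · simp [hpq hq0.symm, ← hq0]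
  · have hscale : Real.negMulLog p = q * Real.negMulLog (p / q) - p * Real.log q := by
      conv_lhs => rw [← div_mul_cancel₀ p hq0.ne', Real.negMulLog_mul]
      simp only [Real.negMulLog]
      field_simp
      ring
    have htangent : q * Real.negMulLog (p / q) ≤ q * (1 - p / q) :=
      mul_le_mul_of_nonneg_left (Real.negMulLog_le_one_sub_self (div_nonneg hp hq)) hq
    rw [mul_sub, mul_one, mul_div_cancel₀ p hq0.ne'] at htangent
    linarith

theorem sum_negMulLog_le_neg_sum_mul_log {p q : ι → ℝ} (hp : ∀ i, 0 ≤ p i) (hq : ∀ i, 0 ≤ q i)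
    (hpq : ∀ i, q i = 0 → p i = 0) (hsum : ∑ i, q i ≤ ∑ i, p i) :
    ∑ i, Real.negMulLog (p i) ≤ -∑ i, p i * Real.log (q i) := by
  have h := Finset.sum_le_sum fun i (_ : i ∈ univ) =>
    negMulLog_add_mul_log_le (hp i) (hq i) (hpq i)
  rw [sum_add_distrib, sum_sub_distrib] at h
  linarith

theorem sum_negMulLog_le_log_card {p : ι → ℝ} (hp : ∀ i, 0 ≤ p i) (hsum : ∑ i, p i = 1) :
    ∑ i, Real.negMulLog (p i) ≤ Real.log (Fintype.card ι) := by
  have : Nonempty ι := by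
    by_contra hempty
    simp [not_nonempty_iff.1 hempty] at hsum
  have h := sum_negMulLog_le_neg_sum_mul_log (q := fun _ => (Fintype.card ι : ℝ)⁻¹) hp
    (fun _ => by positivity) (by simp) (by simp [hsum])
  simpa [← sum_mul, hsum] using h

theorem eq_inv_card_of_log_card_le_sum_negMulLog {p : ι → ℝ} (hp : ∀ i, 0 ≤ p i)
    (hsum : ∑ i, p i = 1) (h : Real.log (Fintype.card ι) ≤ ∑ i, Real.negMulLog (p i)) (i : ι) :
    p i = (Fintype.card ι : ℝ)⁻¹ := by
  have : Nonempty ι := ⟨i⟩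
  have hmean : ∑ j, (Fintype.card ι : ℝ)⁻¹ • p j = (Fintype.card ι : ℝ)⁻¹ := by
    rw [← smul_sum, hsum, smul_eq_mul, mul_one]
  have hjensen : Real.negMulLog (∑ j, (Fintype.card ι : ℝ)⁻¹ • p j) =
      ∑ j, (Fintype.card ι : ℝ)⁻¹ • Real.negMulLog (p j) := by
    rw [hmean, ← smul_sum, h.antisymm' (sum_negMulLog_le_log_card hp hsum)]
    simp [Real.negMulLog]
  rw [Real.strictConcaveOn_negMulLog.map_sum_eq_iff (fun _ _ => by positivity) (by simp)
    fun j _ => hp j] at hjensen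
  rw [hjensen i (mem_univ i), hmean]

theorem sum_negMulLog_le_add_marginals {p : ι × κ → ℝ} (hp : ∀ z, 0 ≤ p z)
    (hsum : ∑ z, p z = 1) :
    ∑ z, Real.negMulLog (p z) ≤
      ∑ i, Real.negMulLog (∑ k, p (i, k)) + ∑ k, Real.negMulLog (∑ i, p (i, k)) := by
  set a : ι → ℝ := fun i => ∑ k, p (i, k) with ha
  set b : κ → ℝ := fun k => ∑ i, p (i, k) with hb
  have ha0 (z : ι × κ) : a z.1 = 0 → p z = 0 := fun h =>
    (sum_eq_zero_iff_of_nonneg fun k _ => hp (z.1, k)).1 h z.2 (mem_univ _)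
  have hb0 (z : ι × κ) : b z.2 = 0 → p z = 0 := fun h =>
    (sum_eq_zero_iff_of_nonneg fun i _ => hp (i, z.2)).1 h z.1 (mem_univ _)
  have hab : ∑ z : ι × κ, a z.1 * b z.2 = 1 := by
    rw [Fintype.sum_prod_type, ← Fintype.sum_mul_sum, ha, hb, ← Fintype.sum_prod_type,
      ← Fintype.sum_prod_type_right, hsum, one_mul]
  have hlog (z : ι × κ) : p z * Real.log (a z.1 * b z.2) =
      p z * Real.log (a z.1) + p z * Real.log (b z.2) := by
    rcases eq_or_ne (p z) 0 with hz | hz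
    · simp [hz]
    · rw [Real.log_mul (mt (ha0 z) hz) (mt (hb0 z) hz), mul_add]
  have hasum : ∑ z, p z * Real.log (a z.1) = ∑ i, a i * Real.log (a i) := by
    simp only [Fintype.sum_prod_type, a, sum_mul]
  have hbsum : ∑ z, p z * Real.log (b z.2) = ∑ k, b k * Real.log (b k) := by
    simp only [Fintype.sum_prod_type_right, b, sum_mul]
  calc ∑ z, Real.negMulLog (p z)
      ≤ -∑ z, p z * Real.log (a z.1 * b z.2) :=
        sum_negMulLog_le_neg_sum_mul_log hp
          (fun z => mul_nonneg (sum_nonneg fun _ _ => hp _) (sum_nonneg fun _ _ => hp _))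
          (fun z h => (mul_eq_zero.1 h).elim (ha0 z) (hb0 z)) (hab.trans hsum.symm).le
    _ = -∑ i, a i * Real.log (a i) - ∑ k, b k * Real.log (b k) := by
        rw [sum_congr rfl fun z _ => hlog z, sum_add_distrib, hasum, hbsum]
        ring
    _ = ∑ i, Real.negMulLog (a i) + ∑ k, Real.negMulLog (b k) := by
        simp only [Real.negMulLog, neg_mul, sum_neg_distrib, sub_eq_add_neg]

theorem sum_map_le_sum_map_mulVec_of_mem_doublyStochastic [DecidableEq ι] {s : Set ℝ} {f : ℝ → ℝ}
    (hf : ConcaveOn ℝ s f) {D : Matrix ι ι ℝ} (hD : D ∈ doublyStochastic ℝ ι) {x : ι → ℝ}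
    (hx : ∀ k, x k ∈ s) :
    ∑ k, f (x k) ≤ ∑ i, f ((D *ᵥ x) i) :=
  calc ∑ k, f (x k)
      = ∑ k, ∑ i, D i k * f (x k) := by
        simp only [← sum_mul, sum_col_of_mem_doublyStochastic hD, one_mul]
    _ = ∑ i, ∑ k, D i k * f (x k) := sum_comm
    _ ≤ ∑ i, f ((D *ᵥ x) i) := sum_le_sum fun i _ =>
        hf.le_map_sum (fun _ _ => nonneg_of_mem_doublyStochastic hD)
          (sum_row_of_mem_doublyStochastic hD i) fun k _ => hx k

end Classical

/-! ### Von Neumann entropy -/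

section VonNeumann

variable {ι κ : Type} [Fintype ι] [DecidableEq ι] [Fintype κ] [DecidableEq κ] {ρ : Matrix ι ι ℂ}

theorem vnEntropy_eq_sum_eigenvalues (hρ : ρ.IsHermitian) :
    vnEntropy ρ = ∑ i, Real.negMulLog (hρ.eigenvalues i) :=
  dif_pos hρ

theorem vnEntropy_eq_sum_roots_charpoly (hρ : ρ.IsHermitian) :
    vnEntropy ρ = (ρ.charpoly.roots.map fun z => Real.negMulLog z.re).sum := by
  rw [vnEntropy_eq_sum_eigenvalues hρ, hρ.roots_charpoly_eq_eigenvalues, Multiset.map_map]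
  simp

theorem vnEntropy_eq_of_charpoly_eq {σ : Matrix κ κ ℂ} (hρ : ρ.IsHermitian) (hσ : σ.IsHermitian)
    (h : ρ.charpoly = σ.charpoly) : vnEntropy ρ = vnEntropy σ := by
  rw [vnEntropy_eq_sum_roots_charpoly hρ, vnEntropy_eq_sum_roots_charpoly hσ, h]

theorem vnEntropy_submatrix_equiv (hρ : ρ.IsHermitian) (e : κ ≃ ι) :
    vnEntropy (ρ.submatrix e e) = vnEntropy ρ :=
  vnEntropy_eq_of_charpoly_eq (hρ.submatrix e) hρ (charpoly_reindex e.symm ρ)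

theorem vnEntropy_transpose (hρ : ρ.IsHermitian) : vnEntropy ρᵀ = vnEntropy ρ :=
  vnEntropy_eq_of_charpoly_eq hρ.transpose hρ (charpoly_transpose ρ)

theorem vnEntropy_unitary_conj (hρ : ρ.IsHermitian) {W : Matrix ι ι ℂ}
    (hW : W ∈ unitaryGroup ι ℂ) : vnEntropy (Wᴴ * ρ * W) = vnEntropy ρ := by
  refine vnEntropy_eq_of_charpoly_eq (isHermitian_conjTranspose_mul_mul W hρ) hρ ?_
  rw [charpoly_mul_comm, ← Matrix.mul_assoc, ← star_eq_conjTranspose,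
    mem_unitaryGroup_iff.1 hW, Matrix.one_mul]

theorem vnEntropy_conjTranspose_mul_self (M : Matrix ι κ ℂ) :
    vnEntropy (Mᴴ * M) = vnEntropy (M * Mᴴ) := by
  have sum_roots_X_pow_mul (k : ℕ) {p : Polynomial ℂ} (hp : p.Monic) :
      ((Polynomial.X ^ k * p).roots.map fun z : ℂ => Real.negMulLog z.re).sum =
        (p.roots.map fun z : ℂ => Real.negMulLog z.re).sum := by
    rw [Polynomial.roots_mul ((Polynomial.monic_X_pow k).mul hp).ne_zero]
    simp [Multiset.map_nsmul, Multiset.sum_nsmul]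
  rw [vnEntropy_eq_sum_roots_charpoly (isHermitian_conjTranspose_mul_self M),
    vnEntropy_eq_sum_roots_charpoly (isHermitian_mul_conjTranspose_self M),
    ← sum_roots_X_pow_mul (Fintype.card ι) (charpoly_monic _), ← charpoly_mul_comm',
    sum_roots_X_pow_mul _ (charpoly_monic _)]

theorem sum_eigenvalues_eq_one (hρ : ρ.IsHermitian) (htr : ρ.trace = 1) :
    ∑ i, hρ.eigenvalues i = 1 := by
  rw [hρ.trace_eq_sum_eigenvalues] at htr
  simpa using congrArg Complex.re htr

theorem vnEntropy_le_log_card (hρ : ρ.PosSemidef) (htr : ρ.trace = 1) :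
    vnEntropy ρ ≤ Real.log (Fintype.card ι) := by
  rw [vnEntropy_eq_sum_eigenvalues hρ.isHermitian]
  exact sum_negMulLog_le_log_card hρ.eigenvalues_nonneg
    (sum_eigenvalues_eq_one hρ.isHermitian htr)

theorem eq_smul_one_of_log_card_le_vnEntropy (hρ : ρ.PosSemidef) (htr : ρ.trace = 1)
    (h : Real.log (Fintype.card ι) ≤ vnEntropy ρ) : ρ = (Fintype.card ι : ℂ)⁻¹ • 1 := by
  rw [vnEntropy_eq_sum_eigenvalues hρ.isHermitian] at h
  have hflat := eq_inv_card_of_log_card_le_sum_negMulLog hρ.eigenvalues_nonneg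
    (sum_eigenvalues_eq_one hρ.isHermitian htr) h
  have hdiag : diagonal (RCLike.ofReal ∘ hρ.isHermitian.eigenvalues : ι → ℂ) =
      (Fintype.card ι : ℂ)⁻¹ • 1 := by
    rw [smul_one_eq_diagonal]
    congr 1
    ext i
    simp [hflat i]
  rw [hρ.isHermitian.spectral_theorem, hdiag, map_smul, map_one]

theorem norm_sq_mem_doublyStochastic {U : Matrix ι ι ℂ} (hU : U ∈ unitaryGroup ι ℂ) :
    Matrix.of (fun i k => ‖U i k‖ ^ 2) ∈ doublyStochastic ℝ ι := by
  refine mem_doublyStochastic_iff_sum.2 ⟨fun i k => sq_nonneg _, fun i => ?_, fun k => ?_⟩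
  · have h := congrFun₂ (mem_unitaryGroup_iff.1 hU) i i
    simp only [mul_apply, star_apply, one_apply_eq, RCLike.star_def, Complex.mul_conj'] at h
    exact_mod_cast h
  · have h := congrFun₂ (mem_unitaryGroup_iff'.1 hU) k k
    simp only [mul_apply, star_apply, one_apply_eq, RCLike.star_def, Complex.conj_mul'] at h
    exact_mod_cast h

theorem re_diag_eq_mulVec_eigenvalues (hρ : ρ.IsHermitian) (i : ι) :
    (ρ i i).re =
      (Matrix.of (fun i k => ‖hρ.eigenvectorUnitary.1 i k‖ ^ 2) *ᵥ hρ.eigenvalues) i := by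
  have h : ρ i i = ∑ k, hρ.eigenvectorUnitary.1 i k * hρ.eigenvalues k *
      star (hρ.eigenvectorUnitary.1 i k) := by
    conv_lhs => rw [hρ.spectral_theorem, Unitary.conjStarAlgAut_apply]
    rw [Matrix.mul_apply]
    exact sum_congr rfl fun k _ => by rw [mul_diagonal]; rfl
  rw [h, Complex.re_sum]
  refine sum_congr rfl fun k _ => ?_
  rw [mul_right_comm, RCLike.star_def, Complex.mul_conj']
  norm_cast

theorem vnEntropy_le_sum_negMulLog_diag (hρ : ρ.PosSemidef) :
    vnEntropy ρ ≤ ∑ i, Real.negMulLog (ρ i i).re := by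
  rw [vnEntropy_eq_sum_eigenvalues hρ.isHermitian]
  simp only [re_diag_eq_mulVec_eigenvalues hρ.isHermitian]
  exact sum_map_le_sum_map_mulVec_of_mem_doublyStochastic Real.concaveOn_negMulLog
    (norm_sq_mem_doublyStochastic hρ.isHermitian.eigenvectorUnitary.2) hρ.eigenvalues_nonneg

end VonNeumann

/-! ### Partial traces and subadditivity -/

section PartialTrace

variable {X Y R : Type*}

/-- The partial trace over the second factor of a matrix indexed by a product. -/
def partialTraceSnd [Fintype Y] [AddCommMonoid R] (ρ : Matrix (X × Y) (X × Y) R) : Matrix X X R :=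
  fun x x' => ∑ y, ρ (x, y) (x', y)

/-- The partial trace over the first factor of a matrix indexed by a product. -/
def partialTraceFst [Fintype X] [AddCommMonoid R] (ρ : Matrix (X × Y) (X × Y) R) : Matrix Y Y R :=
  partialTraceSnd (ρ.submatrix Prod.swap Prod.swap)

theorem isHermitian_partialTraceSnd [Fintype Y] [AddCommMonoid R] [StarAddMonoid R]
    {ρ : Matrix (X × Y) (X × Y) R} (hρ : ρ.IsHermitian) : (partialTraceSnd ρ).IsHermitian :=
  IsHermitian.ext fun x x' => by simp [partialTraceSnd, star_sum, hρ.apply]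

theorem isHermitian_partialTraceFst [Fintype X] [AddCommMonoid R] [StarAddMonoid R]
    {ρ : Matrix (X × Y) (X × Y) R} (hρ : ρ.IsHermitian) : (partialTraceFst ρ).IsHermitian :=
  isHermitian_partialTraceSnd (hρ.submatrix _)

variable [Fintype X] [Fintype Y] [CommRing R] [StarRing R]

theorem partialTraceSnd_kronecker_conj [DecidableEq Y] (U : Matrix X X R) {V : Matrix Y Y R}
    (hV : V ∈ unitaryGroup Y R) (ρ : Matrix (X × Y) (X × Y) R) :
    partialTraceSnd ((U ⊗ₖ V)ᴴ * ρ * (U ⊗ₖ V)) = Uᴴ * partialTraceSnd ρ * U := by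
  let block (x x' : X) : Matrix Y Y R := Matrix.of fun y y' => ρ (x, y) (x', y')
  have trace_block (x x' : X) : (Vᴴ * block x x' * V).trace = partialTraceSnd ρ x x' := by
    rw [trace_mul_comm, ← Matrix.mul_assoc, ← star_eq_conjTranspose, mem_unitaryGroup_iff.1 hV,
      Matrix.one_mul]
    rfl
  have entry (i i' : X) (j : Y) : ((U ⊗ₖ V)ᴴ * ρ * (U ⊗ₖ V)) (i, j) (i', j) =
      ∑ x', ∑ x, star (U x i) * (Vᴴ * block x x' * V) j j * U x' i' := by
    simp only [mul_apply, conjTranspose_apply, kroneckerMap_apply, Fintype.sum_prod_type, block,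
      of_apply, sum_mul, mul_sum, star_mul']
    refine sum_congr rfl fun x' _ => ?_
    rw [sum_comm]
    refine sum_congr rfl fun x _ => sum_congr rfl fun y' _ => sum_congr rfl fun y _ => ?_
    ring
  ext i i'
  calc ∑ j, ((U ⊗ₖ V)ᴴ * ρ * (U ⊗ₖ V)) (i, j) (i', j)
      = ∑ x', ∑ x, star (U x i) * (Vᴴ * block x x' * V).trace * U x' i' := by
        simp only [entry, trace, diag_apply, mul_sum, sum_mul]
        rw [sum_comm]
        exact sum_congr rfl fun x' _ => sum_comm
    _ = (Uᴴ * partialTraceSnd ρ * U) i i' := by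
        simp only [trace_block, mul_apply, conjTranspose_apply, sum_mul]

theorem partialTraceFst_kronecker_conj [DecidableEq X] {U : Matrix X X R}
    (hU : U ∈ unitaryGroup X R) (V : Matrix Y Y R) (ρ : Matrix (X × Y) (X × Y) R) :
    partialTraceFst ((U ⊗ₖ V)ᴴ * ρ * (U ⊗ₖ V)) = Vᴴ * partialTraceFst ρ * V := by
  have kronecker_swap : (U ⊗ₖ V).submatrix (Equiv.prodComm Y X) (Equiv.prodComm Y X) = V ⊗ₖ U := by
    ext
    simp [mul_comm]
  have h := partialTraceSnd_kronecker_conj V hU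
    (ρ.submatrix (Equiv.prodComm Y X) (Equiv.prodComm Y X))
  rwa [← kronecker_swap, conjTranspose_submatrix, submatrix_mul_equiv, submatrix_mul_equiv] at h

end PartialTrace

theorem conj_eigenvectorUnitary_eq_diagonal {ι : Type*} [Fintype ι] [DecidableEq ι]
    {ρ : Matrix ι ι ℂ} (hρ : ρ.IsHermitian) :
    hρ.eigenvectorUnitary.1ᴴ * ρ * hρ.eigenvectorUnitary.1 =
      diagonal (RCLike.ofReal ∘ hρ.eigenvalues) := by
  rw [← hρ.conjStarAlgAut_star_eigenvectorUnitary, Unitary.conjStarAlgAut_star_apply,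
    star_eq_conjTranspose]

theorem vnEntropy_le_partialTrace_add_partialTrace {X Y : Type} [Fintype X] [DecidableEq X]
    [Fintype Y] [DecidableEq Y] {ρ : Matrix (X × Y) (X × Y) ℂ} (hρ : ρ.PosSemidef)
    (htr : ρ.trace = 1) :
    vnEntropy ρ ≤ vnEntropy (partialTraceSnd ρ) + vnEntropy (partialTraceFst ρ) := by
  have hσ := isHermitian_partialTraceSnd hρ.isHermitian
  have hτ := isHermitian_partialTraceFst hρ.isHermitian
  set U := hσ.eigenvectorUnitary
  set V := hτ.eigenvectorUnitary
  have hW : U.1 ⊗ₖ V.1 ∈ unitaryGroup (X × Y) ℂ := kronecker_mem_unitary U.2 V.2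
  set ρ' := (U.1 ⊗ₖ V.1)ᴴ * ρ * (U.1 ⊗ₖ V.1) with hρ'
  have hpos : ρ'.PosSemidef := hρ.conjTranspose_mul_mul_same _
  have htr' : ∑ z, (ρ' z z).re = 1 := by
    have : ρ'.trace = 1 := by
      rw [hρ', trace_mul_comm, ← Matrix.mul_assoc, ← star_eq_conjTranspose,
        mem_unitaryGroup_iff.1 hW, Matrix.one_mul, htr]
    simpa [trace] using congrArg Complex.re this
  have marginal_fst (x : X) : ∑ y, (ρ' (x, y) (x, y)).re = hσ.eigenvalues x := by
    have h := congrFun₂ (partialTraceSnd_kronecker_conj U.1 V.2 ρ) x x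
    rw [conj_eigenvectorUnitary_eq_diagonal hσ, diagonal_apply_eq] at h
    simpa [partialTraceSnd] using congrArg Complex.re h
  have marginal_snd (y : Y) : ∑ x, (ρ' (x, y) (x, y)).re = hτ.eigenvalues y := by
    have h := congrFun₂ (partialTraceFst_kronecker_conj U.2 V.1 ρ) y y
    rw [conj_eigenvectorUnitary_eq_diagonal hτ, diagonal_apply_eq] at h
    simpa [partialTraceFst, partialTraceSnd] using congrArg Complex.re h
  calc vnEntropy ρ = vnEntropy ρ' := (vnEntropy_unitary_conj hρ.isHermitian hW).symm
    _ ≤ ∑ z, Real.negMulLog (ρ' z z).re := vnEntropy_le_sum_negMulLog_diag hpos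
    _ ≤ ∑ x, Real.negMulLog (∑ y, (ρ' (x, y) (x, y)).re) +
          ∑ y, Real.negMulLog (∑ x, (ρ' (x, y) (x, y)).re) :=
        sum_negMulLog_le_add_marginals (fun z => (Complex.le_def.1 hpos.diag_nonneg).1) htr'
    _ = vnEntropy (partialTraceSnd ρ) + vnEntropy (partialTraceFst ρ) := by
        simp only [marginal_fst, marginal_snd, vnEntropy_eq_sum_eigenvalues hσ,
          vnEntropy_eq_sum_eigenvalues hτ]

/-! ### Reductions of pure states -/

section PureState

variable {m : ℕ} {A B C : Finset (Fin m)} {ψ : (Fin m → Fin 2) → ℂ}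

/-- `glue` as a bijection between pairs of partial bit strings and full bit strings. -/
def glueEquiv (A : Finset (Fin m)) :
    ({x // x ∈ A} → Fin 2) × ({x // x ∈ Aᶜ} → Fin 2) ≃ (Fin m → Fin 2) where
  toFun p := glue A p.1 p.2
  invFun f := (fun i => f i, fun i => f i)
  left_inv p := by
    ext i
    · simp [glue, i.2]
    · simp [glue, Finset.mem_compl.1 i.2]
  right_inv f := by
    funext i
    by_cases h : i ∈ A <;> simp [glue, h]

/-- Bit strings on the disjoint union `C` of `A` and `B` as pairs of bit strings. The union is given
by an equation so that `C` may be a set such as `Aᶜ` that is not syntactically a union. -/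
def piUnionEquiv (hAB : Disjoint A B) (hC : A ∪ B = C) :
    ({x // x ∈ A} → Fin 2) × ({x // x ∈ B} → Fin 2) ≃ ({x // x ∈ C} → Fin 2) where
  toFun p i := if h : i.1 ∈ A then p.1 ⟨i, h⟩ else
    p.2 ⟨i, (mem_union.1 (hC ▸ i.2 : i.1 ∈ A ∪ B)).resolve_left h⟩
  invFun f := (fun i => f ⟨i, hC ▸ mem_union_left B i.2⟩,
    fun i => f ⟨i, hC ▸ mem_union_right A i.2⟩)
  left_inv p := by
    ext i
    · simp [i.2]
    · simp [Finset.disjoint_right.1 hAB i.2]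
  right_inv f := by
    funext i
    by_cases h : i.1 ∈ A <;> simp [h]

theorem piUnionEquiv_swap (hAB : Disjoint A B) (hC : A ∪ B = C) (hC' : B ∪ A = C)
    (u : {x // x ∈ A} → Fin 2) (v : {x // x ∈ B} → Fin 2) :
    piUnionEquiv hAB.symm hC' (v, u) = piUnionEquiv hAB hC (u, v) := by
  funext ⟨i, hi⟩
  have hnot : i ∈ A → i ∉ B := fun h => Finset.disjoint_left.1 hAB h
  have hmem : i ∈ A ∨ i ∈ B := by rwa [← mem_union, hC]
  by_cases hA : i ∈ A <;> simp_all [piUnionEquiv]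

theorem glue_piUnionEquiv (hAB : Disjoint A B) (hC : A ∪ B = C) (hBC : Disjoint B Cᶜ)
    (hA : B ∪ Cᶜ = Aᶜ) (u : {x // x ∈ A} → Fin 2) (v : {x // x ∈ B} → Fin 2)
    (w : {x // x ∈ Cᶜ} → Fin 2) :
    glue C (piUnionEquiv hAB hC (u, v)) w = glue A u (piUnionEquiv hBC hA (v, w)) := by
  subst hC
  funext i
  by_cases hA : i ∈ A <;> by_cases hB : i ∈ B <;> simp [glue, piUnionEquiv, hA, hB]

theorem partialTraceSnd_reducedDensity (ψ : (Fin m → Fin 2) → ℂ) (hAB : Disjoint A B)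
    (hC : A ∪ B = C) :
    partialTraceSnd ((reducedDensity ψ C).submatrix (piUnionEquiv hAB hC) (piUnionEquiv hAB hC)) =
      reducedDensity ψ A := by
  have hBC : Disjoint B Cᶜ := by
    rw [← hC]
    exact disjoint_compl_right.mono_left subset_union_right
  have hA : B ∪ Cᶜ = Aᶜ := by
    ext i
    have hnot : i ∈ A → i ∉ B := fun h => Finset.disjoint_left.1 hAB h
    simp only [← hC, mem_union, Finset.mem_compl]
    tauto
  ext u u'
  simp only [partialTraceSnd, reducedDensity, submatrix_apply, glue_piUnionEquiv hAB hC hBC hA]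
  rw [← (piUnionEquiv hBC hA).sum_comp, Fintype.sum_prod_type]

theorem partialTraceFst_reducedDensity (ψ : (Fin m → Fin 2) → ℂ) (hAB : Disjoint A B)
    (hC : A ∪ B = C) :
    partialTraceFst ((reducedDensity ψ C).submatrix (piUnionEquiv hAB hC) (piUnionEquiv hAB hC)) =
      reducedDensity ψ B := by
  have hC' : B ∪ A = C := union_comm A B ▸ hC
  rw [← partialTraceSnd_reducedDensity ψ hAB.symm hC', partialTraceFst]
  congr 1
  ext ⟨v, u⟩ ⟨v', u'⟩
  simp [piUnionEquiv_swap hAB hC hC']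

/-- The amplitudes of `ψ` as a matrix with respect to the bipartition `A | Aᶜ`. -/
def amplitudeMatrix (ψ : (Fin m → Fin 2) → ℂ) (A : Finset (Fin m)) :
    Matrix ({x // x ∈ A} → Fin 2) ({x // x ∈ Aᶜ} → Fin 2) ℂ :=
  fun u w => ψ (glue A u w)

theorem reducedDensity_eq_amplitudeMatrix_mul (ψ : (Fin m → Fin 2) → ℂ) (A : Finset (Fin m)) :
    reducedDensity ψ A = amplitudeMatrix ψ A * (amplitudeMatrix ψ A)ᴴ :=
  rfl

theorem posSemidef_reducedDensity (ψ : (Fin m → Fin 2) → ℂ) (A : Finset (Fin m)) :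
    (reducedDensity ψ A).PosSemidef :=
  posSemidef_self_mul_conjTranspose (amplitudeMatrix ψ A)

theorem trace_reducedDensity (hψ : ∑ x, ‖ψ x‖ ^ 2 = 1) (A : Finset (Fin m)) :
    (reducedDensity ψ A).trace = 1 := by
  calc (reducedDensity ψ A).trace = ∑ p, ((‖ψ (glueEquiv A p)‖ ^ 2 : ℝ) : ℂ) := by
        rw [Fintype.sum_prod_type]
        refine sum_congr rfl fun u _ => sum_congr rfl fun w _ => ?_
        rw [Complex.mul_conj']
        norm_cast
    _ = 1 := by
        rw [(glueEquiv A).sum_comp fun x => ((‖ψ x‖ ^ 2 : ℝ) : ℂ), ← Complex.ofReal_sum, hψ,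
          Complex.ofReal_one]

theorem amplitudeMatrix_compl (ψ : (Fin m → Fin 2) → ℂ) (A : Finset (Fin m)) :
    amplitudeMatrix ψ Aᶜ = (amplitudeMatrix ψ A)ᵀ.submatrix id
      (Equiv.arrowCongr (Equiv.subtypeEquivRight (q := (· ∈ A)) (by simp)) (Equiv.refl _)) := by
  ext w u
  refine congrArg ψ (funext fun i => ?_)
  by_cases h : i ∈ A
  · rw [glue, glue, dif_neg (by simpa using h), dif_pos h]
    rfl
  · simp [glue, h]

theorem sent_compl (ψ : (Fin m → Fin 2) → ℂ) (A : Finset (Fin m)) : Sent ψ Aᶜ = Sent ψ A := by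
  have hcompl : reducedDensity ψ Aᶜ = ((amplitudeMatrix ψ A)ᴴ * amplitudeMatrix ψ A)ᵀ := by
    rw [reducedDensity_eq_amplitudeMatrix_mul, amplitudeMatrix_compl, conjTranspose_submatrix,
      submatrix_mul_equiv, submatrix_id_id, transpose_mul]
    rfl
  rw [Sent, hcompl, vnEntropy_transpose (isHermitian_conjTranspose_mul_self _),
    vnEntropy_conjTranspose_mul_self, ← reducedDensity_eq_amplitudeMatrix_mul, Sent]

theorem sent_union_le (hψ : ∑ x, ‖ψ x‖ ^ 2 = 1) (hAB : Disjoint A B) :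
    Sent ψ (A ∪ B) ≤ Sent ψ A + Sent ψ B := by
  have hpos := posSemidef_reducedDensity ψ (A ∪ B)
  let e := piUnionEquiv hAB rfl
  have htr : ((reducedDensity ψ (A ∪ B)).submatrix e e).trace = 1 := by
    rw [← trace_reducedDensity hψ (A ∪ B)]
    exact e.sum_comp fun u => reducedDensity ψ (A ∪ B) u u
  have h := vnEntropy_le_partialTrace_add_partialTrace (hpos.submatrix e) htr
  rwa [vnEntropy_submatrix_equiv hpos.isHermitian, partialTraceSnd_reducedDensity,
    partialTraceFst_reducedDensity] at h

theorem sent_le_sent_union_add (hψ : ∑ x, ‖ψ x‖ ^ 2 = 1) (hAB : Disjoint A B) :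
    Sent ψ A ≤ Sent ψ (A ∪ B) + Sent ψ B := by
  have hcompl : (A ∪ B)ᶜ ∪ B = Aᶜ := by
    ext i
    have hnot : i ∈ A → i ∉ B := fun h => Finset.disjoint_left.1 hAB h
    simp only [mem_union, Finset.mem_compl]
    tauto
  have h := sent_union_le hψ (disjoint_compl_left.mono_right subset_union_right :
    Disjoint (A ∪ B)ᶜ B)
  rwa [hcompl, sent_compl, sent_compl] at h

theorem log_card_bitStrings (A : Finset (Fin m)) :
    Real.log (Fintype.card ({x // x ∈ A} → Fin 2)) = #A * Real.log 2 := by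
  simp

theorem sent_le_card_mul_log_two (hψ : ∑ x, ‖ψ x‖ ^ 2 = 1) (A : Finset (Fin m)) :
    Sent ψ A ≤ #A * Real.log 2 :=
  log_card_bitStrings A ▸
    vnEntropy_le_log_card (posSemidef_reducedDensity ψ A) (trace_reducedDensity hψ A)

theorem maximallyMixed_of_card_mul_log_two_le_sent (hψ : ∑ x, ‖ψ x‖ ^ 2 = 1)
    (h : #A * Real.log 2 ≤ Sent ψ A) : MaximallyMixed ψ A := by
  have := eq_smul_one_of_log_card_le_vnEntropy (posSemidef_reducedDensity ψ A)
    (trace_reducedDensity hψ A) (by rwa [log_card_bitStrings])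
  simpa [MaximallyMixed] using this

end PureState

/-! ### Quantum secret sharing -/

theorem IsPureQSSState.log_two_le_sent_of_pivotal {n : ℕ} {Γ : Finset (Fin n) → Prop}
    {ψ : (Fin (n + 1) → Fin 2) → ℂ} (hψ : IsPureQSSState Γ ψ) {B : Finset (Fin n)} {i : Fin n}
    (hB : ¬ Γ B) (hiB : Γ (insert i B)) : Real.log 2 ≤ Sent ψ {i.succ} := by
  have hi : i ∉ B := fun h => hB (insert_eq_of_mem h ▸ hiB)
  have hpos : posOf (insert i B) = posOf B ∪ {i.succ} := by
    rw [posOf, image_insert, insert_eq, union_comm, posOf]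
  have hdisj : Disjoint (posOf B) {i.succ} := by simpa [posOf] using hi
  have hdisj0 : Disjoint (insert 0 (posOf B)) {i.succ} := by simpa [posOf] using hi
  have hrecover := hψ.recover _ hiB
  rw [hpos, ← insert_union] at hrecover
  have hsecrecy := hψ.secrecy B hB
  have hsubadd := sent_union_le hψ.normalized hdisj
  have harakiLieb := sent_le_sent_union_add hψ.normalized hdisj0
  linarith

theorem IsPureQSSState.maximallyMixed_of_pivotal {n : ℕ} {Γ : Finset (Fin n) → Prop}
    {ψ : (Fin (n + 1) → Fin 2) → ℂ} (hψ : IsPureQSSState Γ ψ) {B : Finset (Fin n)} {i : Fin n}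
    (hB : ¬ Γ B) (hiB : Γ (insert i B)) :
    Sent ψ {i.succ} = Real.log 2 ∧ MaximallyMixed ψ {i.succ} := by
  have hge := hψ.log_two_le_sent_of_pivotal hB hiB
  have hle := sent_le_card_mul_log_two hψ.normalized {i.succ}
  exact ⟨le_antisymm (by simpa using hle) hge,
    maximallyMixed_of_card_mul_log_two_le_sent hψ.normalized (by simpa using hge)⟩

theorem stmt15 (n : ℕ) (hn : 3 ≤ n) (Γ : Finset (Fin n) → Prop)
    (hmono : Monotonic Γ) (hnc : NoCloning Γ) (hnr : NoRedundancy Γ)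
    (ψ : (Fin (n + 1) → Fin 2) → ℂ) (hψ : IsPureQSSState Γ ψ) :
    ∀ i : Fin n, Sent ψ {i.succ} = Real.log 2 ∧ MaximallyMixed ψ {i.succ} := by
  intro i
  obtain ⟨A, ⟨hA, hminimal⟩, hi⟩ := hnr i
  exact hψ.maximallyMixed_of_pivotal (hminimal _ (erase_ssubset hi)) (by rwa [insert_erase hi])
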